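/- arXiv:math/9811184 — 2 statements merged into one kernel-verified Lean document; each statement's English description precedes it below -/
import Mathlib

section
/- (Lemma 1.) Let θ : ℝ² → ℝ be measurable with θ ∈ L^∞(ℝ²) ∩ L²(ℝ²). Let p, q ∈ ℝ² with τ := |p − q| satisfying 0 < τ ≤ 1/2. Then the function y ↦ θ(y)(1/|y − p| − 1/|y − q|) is absolutely integrable on ℝ², and |∫_{ℝ²} θ(y)(1/|y − p| − 1/|y − q|) dy| ≤ K₁ τ log(1/τ), where K₁ is a constant depending only on ‖θ‖_{L^∞} and ‖θ‖_{L²}. -/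
open MeasureTheory Set

noncomputable section

/-- Euclidean norm on `ℝ²`. -/
def e2 (y : ℝ × ℝ) : ℝ := Real.sqrt (y.1 ^ 2 + y.2 ^ 2)

lemma e2_eq (y : ℝ × ℝ) : e2 y = ‖Complex.measurableEquivRealProd.symm y‖ := by
  rw [Complex.norm_def, Complex.normSq_apply, e2]
  simp [Complex.measurableEquivRealProd, pow_two]

lemma e2_abs_sub (y p q : ℝ × ℝ) : |e2 (y - p) - e2 (y - q)| ≤ e2 (p - q) := by
  have h : ∀ u v : ℝ × ℝ, e2 (u - v) = ‖(⟨u.1, u.2⟩ : ℂ) - ⟨v.1, v.2⟩‖ := by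
    intro u v
    rw [Complex.norm_def, Complex.normSq_apply, e2]
    simp [pow_two]
  rw [h, h, h]
  refine (abs_norm_sub_norm_le _ _).trans (le_of_eq ?_)
  rw [sub_sub_sub_cancel_left, norm_sub_rev]

lemma e2_continuous : Continuous e2 := by
  unfold e2; fun_prop

lemma e2_nonneg (y : ℝ × ℝ) : 0 ≤ e2 y := Real.sqrt_nonneg _

lemma e2_pos {y : ℝ × ℝ} (h : y ≠ 0) : 0 < e2 y := by
  apply Real.sqrt_pos.2
  by_contra hc
  apply h
  have h1 : y.1 = 0 := by nlinarith [sq_nonneg y.1, sq_nonneg y.2]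
  have h2 : y.2 = 0 := by nlinarith [sq_nonneg y.1, sq_nonneg y.2]
  exact Prod.ext h1 h2

lemma radial {f : ℝ → ℝ} {s : Set ℝ} (hs : MeasurableSet s) (hs0 : s ⊆ Ioi 0)
    (hf : IntegrableOn (fun r => r * f r) s) (p : ℝ × ℝ) :
    Integrable (fun y => s.indicator f (e2 (y - p))) ∧
    ∫ y, s.indicator f (e2 (y - p)) = 2 * Real.pi * ∫ r in s, r * f r := by
  have hmp := Complex.volume_preserving_equiv_real_prod.symm
  have key : (fun r : ℝ => r ^ (Module.finrank ℝ ℂ - 1) • s.indicator f r)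
      = s.indicator (fun r => r * f r) := by
    funext r
    by_cases h : r ∈ s <;> simp [h]
  have h1 : Integrable (fun z : ℂ => s.indicator f ‖z‖) := by
    rw [integrable_fun_norm_addHaar (μ := (volume : Measure ℂ)) (f := s.indicator f), key]
    exact ((integrable_indicator_iff hs).2 hf).integrableOn
  have h2 : Integrable (fun y : ℝ × ℝ => s.indicator f (e2 y)) := by
    simp_rw [e2_eq]
    exact hmp.integrable_comp_of_integrable h1
  refine ⟨h2.comp_sub_right p, ?_⟩
  rw [integral_sub_right_eq_self (fun y : ℝ × ℝ => s.indicator f (e2 y)) p]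
  simp_rw [e2_eq]
  rw [hmp.integral_comp' (fun z : ℂ => s.indicator f ‖z‖),
    integral_fun_norm_addHaar (volume : Measure ℂ) (s.indicator f), key,
    setIntegral_indicator hs, inter_eq_right.2 hs0]
  simp [Measure.real]
  ring

/-- The radial majorant. -/
def maj (A τ r : ℝ) : ℝ :=
  (Ioc 0 τ).indicator (fun r => A * r⁻¹) r + (Ioc τ 1).indicator (fun r => A * τ * (r ^ 2)⁻¹) r
    + (Ioi 1).indicator (fun r => τ / 2 * (r ^ 4)⁻¹) r

lemma maj_nonneg {A τ : ℝ} (hA : 0 ≤ A) (hτ : 0 ≤ τ) (r : ℝ) : 0 ≤ maj A τ r := by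
  unfold maj
  refine add_nonneg (add_nonneg ?_ ?_) ?_ <;> apply indicator_nonneg <;> intro x hx
  · have := hx.1.le; positivity
  · positivity
  · positivity

lemma maj_integral {A τ : ℝ} (hτ : 0 < τ) (hτ1 : τ ≤ 1) (p : ℝ × ℝ) :
    Integrable (fun y => maj A τ (e2 (y - p))) ∧
    ∫ y, maj A τ (e2 (y - p)) = 2 * Real.pi * (A * τ + A * τ * Real.log (1 / τ) + τ / 4) := by
  have c1 : EqOn (fun r : ℝ => r * (A * r⁻¹)) (fun _ => A) (Ioc 0 τ) := by
    intro r hr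
    have := hr.1.ne'
    simp only
    field_simp
  have c2 : EqOn (fun r : ℝ => r * (A * τ * (r ^ 2)⁻¹)) (fun r => A * τ * r⁻¹) (Ioc τ 1) := by
    intro r hr
    have := (hτ.trans hr.1).ne'
    simp only
    field_simp
  have c3 : EqOn (fun r : ℝ => r * (τ / 2 * (r ^ 4)⁻¹)) (fun r => τ / 2 * r ^ (-3 : ℝ)) (Ioi 1) := by
    intro r hr
    have h0 : (0 : ℝ) < r := lt_trans one_pos hr
    simp only
    rw [Real.rpow_neg h0.le]
    norm_cast
    field_simp
  have i1 : IntegrableOn (fun r : ℝ => r * (A * r⁻¹)) (Ioc 0 τ) := by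
    rw [integrableOn_congr_fun c1 measurableSet_Ioc]
    simp
  have ii2 : IntervalIntegrable (fun r : ℝ => r⁻¹) volume τ 1 := by
    apply intervalIntegral.intervalIntegrable_inv
    · intro x hx
      rw [uIcc_of_le hτ1] at hx
      exact (hτ.trans_le hx.1).ne'
    · exact continuousOn_id
  have i2 : IntegrableOn (fun r : ℝ => r * (A * τ * (r ^ 2)⁻¹)) (Ioc τ 1) := by
    rw [integrableOn_congr_fun c2 measurableSet_Ioc]
    exact ((intervalIntegrable_iff_integrableOn_Ioc_of_le hτ1).1 ii2).const_mul _
  have i3 : IntegrableOn (fun r : ℝ => r * (τ / 2 * (r ^ 4)⁻¹)) (Ioi 1) := by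
    rw [integrableOn_congr_fun c3 measurableSet_Ioi]
    exact (integrableOn_Ioi_rpow_of_lt (by norm_num) one_pos).const_mul _
  obtain ⟨r1, e1⟩ := radial measurableSet_Ioc (fun r hr => hr.1) i1 p
  obtain ⟨r2, e2'⟩ := radial measurableSet_Ioc (fun r hr => hτ.trans hr.1) i2 p
  obtain ⟨r3, e3⟩ := radial measurableSet_Ioi (fun r (hr : 1 < r) => one_pos.trans hr) i3 p
  unfold maj
  refine ⟨(r1.add r2).add r3, ?_⟩
  have s12 := integral_add r1 r2
  have s123 := integral_add (r1.add r2) r3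
  simp only [Pi.add_apply] at s12 s123
  rw [s123, s12, e1, e2', e3, setIntegral_congr_fun measurableSet_Ioc c1,
    setIntegral_congr_fun measurableSet_Ioc c2, setIntegral_congr_fun measurableSet_Ioi c3,
    integral_const_mul, integral_const_mul, integral_Ioi_rpow_of_lt (by norm_num) one_pos,
    ← intervalIntegral.integral_of_le hτ1, integral_inv_of_pos hτ one_pos]
  simp [hτ.le]
  ring

lemma pointwise {A τ a b t : ℝ} (hτ : 0 < τ) (ht : |t| ≤ A)
    (ha : 0 < a) (hab : a ≤ b) (h : b - a ≤ τ) :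
    |t * (a⁻¹ - b⁻¹)| ≤ maj A τ a + τ * t ^ 2 / 2 := by
  have hA : 0 ≤ A := (abs_nonneg t).trans ht
  have hb : 0 < b := ha.trans_le hab
  have h0 : 0 ≤ a⁻¹ - b⁻¹ := sub_nonneg.2 (inv_anti₀ ha hab)
  have h1 : a⁻¹ - b⁻¹ ≤ a⁻¹ := by have := inv_pos.2 hb; linarith
  have h2 : a⁻¹ - b⁻¹ ≤ τ * (a ^ 2)⁻¹ := by
    rw [inv_sub_inv ha.ne' hb.ne', ← div_eq_mul_inv]
    apply div_le_div₀ hτ.le h (by positivity)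
    nlinarith
  rw [abs_mul, abs_of_nonneg h0]
  have hq : 0 ≤ τ * t ^ 2 / 2 := by positivity
  have n1 : 0 ≤ (Ioc 0 τ).indicator (fun r => A * r⁻¹) a := by
    apply indicator_nonneg; intro x hx; have := hx.1.le; positivity
  have n2 : 0 ≤ (Ioc τ 1).indicator (fun r => A * τ * (r ^ 2)⁻¹) a := by
    apply indicator_nonneg; intro x hx; positivity
  have n3 : 0 ≤ (Ioi 1).indicator (fun r => τ / 2 * (r ^ 4)⁻¹) a := by
    apply indicator_nonneg; intro x hx; positivity
  unfold maj
  by_cases k1 : a ≤ τ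
  · have : |t| * (a⁻¹ - b⁻¹) ≤ A * a⁻¹ := mul_le_mul ht h1 h0 hA
    rw [indicator_of_mem (show a ∈ Ioc 0 τ from ⟨ha, k1⟩)]
    linarith
  · by_cases k2 : a ≤ 1
    · have : |t| * (a⁻¹ - b⁻¹) ≤ A * (τ * (a ^ 2)⁻¹) := mul_le_mul ht h2 h0 hA
      rw [indicator_of_mem (show a ∈ Ioc τ 1 from ⟨not_le.1 k1, k2⟩)]
      linarith
    · have : |t| * (a⁻¹ - b⁻¹) ≤ |t| * (τ * (a ^ 2)⁻¹) :=
        mul_le_mul_of_nonneg_left h2 (abs_nonneg t)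
      rw [indicator_of_mem (show a ∈ Ioi 1 from not_le.1 k2)]
      have e4 : (a ^ 4)⁻¹ = ((a ^ 2)⁻¹) ^ 2 := by rw [inv_pow, ← pow_mul]
      have := mul_nonneg hτ.le (sq_nonneg (|t| - (a ^ 2)⁻¹))
      have := sq_abs t
      rw [e4]
      nlinarith

/-- **Lemma 1** (Córdoba). Let `θ : ℝ² → ℝ` be measurable and in `L^∞ ∩ L²`, with
`‖θ‖_∞ ≤ A` and `‖θ‖_{L²} ≤ B`. Then there is a constant `K₁`, depending only on `A`
and `B`, such that for all `p, q ∈ ℝ²` with `τ = |p − q| ∈ (0, 1/2]`, the function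
`y ↦ θ(y)(1/|y−p| − 1/|y−q|)` is absolutely integrable and
`|∫ θ(y)(1/|y−p| − 1/|y−q|) dy| ≤ K₁ τ log(1/τ)`. -/
theorem stream_function_difference_bound (A B : ℝ) :
    ∃ K₁ : ℝ, 0 < K₁ ∧
      ∀ θ : ℝ × ℝ → ℝ, Measurable θ →
        (∀ y, |θ y| ≤ A) →
        Integrable (fun y => (θ y) ^ 2) →
        Real.sqrt (∫ y, (θ y) ^ 2) ≤ B →
        ∀ p q : ℝ × ℝ, 0 < e2 (p - q) → e2 (p - q) ≤ 1 / 2 →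
          Integrable (fun y => θ y * ((e2 (y - p))⁻¹ - (e2 (y - q))⁻¹)) ∧
          |∫ y, θ y * ((e2 (y - p))⁻¹ - (e2 (y - q))⁻¹)| ≤
            K₁ * e2 (p - q) * Real.log (1 / e2 (p - q)) := by
  have hl2 : 0 < Real.log 2 := Real.log_pos one_lt_two
  have hpi := Real.pi_pos
  refine ⟨4 * Real.pi * |A| + (4 * Real.pi * |A| + Real.pi + B ^ 2) / Real.log 2,
    by positivity, ?_⟩
  intro θ hθ hA hint hB p q hτ hτ2
  have hA0 : 0 ≤ A := (abs_nonneg _).trans (hA 0)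
  have hqp := e2_abs_sub
  set τ := e2 (p - q) with hτdef
  obtain ⟨ip, ep⟩ := maj_integral (A := A) hτ (by linarith) p
  obtain ⟨iq, eq⟩ := maj_integral (A := A) hτ (by linarith) q
  have iθ : Integrable (fun y => τ / 2 * θ y ^ 2) := hint.const_mul _
  have iG := (ip.add iq).add iθ
  have hG := integral_add (ip.add iq) iθ
  have hG' := integral_add ip iq
  simp only [Pi.add_apply] at hG hG'
  rw [hG', ep, eq, integral_const_mul] at hG
  have hle : ∀ᵐ y, ‖θ y * ((e2 (y - p))⁻¹ - (e2 (y - q))⁻¹)‖ ≤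
      maj A τ (e2 (y - p)) + maj A τ (e2 (y - q)) + τ / 2 * θ y ^ 2 := by
    have np : ∀ᵐ y : ℝ × ℝ, y ≠ p := by simp [ae_iff]
    have nq : ∀ᵐ y : ℝ × ℝ, y ≠ q := by simp [ae_iff]
    filter_upwards [np, nq] with y hp hq
    have pa := e2_pos (sub_ne_zero.2 hp)
    have pb := e2_pos (sub_ne_zero.2 hq)
    have hd := abs_le.1 (e2_abs_sub y p q)
    have m1 := maj_nonneg hA0 hτ.le (e2 (y - p))
    have m2 := maj_nonneg hA0 hτ.le (e2 (y - q))
    rw [Real.norm_eq_abs]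
    rcases le_total (e2 (y - p)) (e2 (y - q)) with h | h
    · have := pointwise hτ (hA y) pa h (by linarith)
      linarith
    · have := pointwise hτ (hA y) pb h (by linarith)
      rw [← abs_neg, ← mul_neg, neg_sub]
      linarith
  have hm : Measurable (fun y => θ y * ((e2 (y - p))⁻¹ - (e2 (y - q))⁻¹)) := by
    have := e2_continuous.measurable
    fun_prop
  refine ⟨iG.mono' hm.aestronglyMeasurable hle, ?_⟩
  have hfin := norm_integral_le_of_norm_le iG hle
  simp only [Pi.add_apply] at hfin
  rw [hG, Real.norm_eq_abs] at hfin
  refine hfin.trans ?_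
  have hI : ∫ y, θ y ^ 2 ≤ B ^ 2 := (Real.sqrt_le_left ((Real.sqrt_nonneg _).trans hB)).1 hB
  have hL : Real.log 2 ≤ Real.log (1 / τ) := by
    apply Real.log_le_log two_pos
    rw [le_div_iff₀ hτ]; linarith
  have hL1 : 1 ≤ Real.log (1 / τ) / Real.log 2 := (one_le_div hl2).2 hL
  rw [abs_of_nonneg hA0]
  have hI2 : τ / 2 * ∫ y, θ y ^ 2 ≤ τ * B ^ 2 := by
    nlinarith [mul_le_mul_of_nonneg_left hI hτ.le, mul_nonneg hτ.le (sq_nonneg B)]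
  have hfac : 0 ≤ (4 * Real.pi * A + Real.pi + B ^ 2) * τ := by positivity
  have hfin2 := mul_le_mul_of_nonneg_left hL1 hfac
  calc _ ≤ 4 * Real.pi * A * τ * Real.log (1 / τ) + (4 * Real.pi * A + Real.pi + B ^ 2) * τ * 1 := by
        linarith
    _ ≤ 4 * Real.pi * A * τ * Real.log (1 / τ) + (4 * Real.pi * A + Real.pi + B ^ 2) * τ *
          (Real.log (1 / τ) / Real.log 2) := by linarith
    _ = _ := by ring

end
end

section
/- Let C > 0, let Φ : [0,∞) → [0,∞) be continuous, and let N : [0,∞) → (0,∞) be differentiable such that for every t ≥ 0 with N(t) > e^{e^t} one has N'(t) ≤ C (e^{e^t} + Φ(t)) N(t) log N(t). Then there exists a constant c > 0, depending only on C and N(0), such that N(t) ≤ exp(exp(c(1 + ∫₀ᵗ (e^{e^s} + Φ(s)) ds))) for all t ≥ 0. -/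
open Set Filter Topology

noncomputable section

/-- **Gronwall-type lemma for the double-exponential bound.** Let `C > 0`, let
`Φ : [0,∞) → [0,∞)` be continuous, and let `N : [0,∞) → (0,∞)` be differentiable with
`N'(t) ≤ C (e^{eᵗ} + Φ(t)) N(t) log N(t)` whenever `N(t) > e^{eᵗ}`. Then there is a
constant `c > 0`, depending only on `C` and `N(0)`, such that
`N(t) ≤ exp(exp(c(1 + ∫₀ᵗ (e^{eˢ} + Φ(s)) ds)))` for all `t ≥ 0`. -/
theorem double_exponential_gronwall (C N₀ : ℝ) (hC : 0 < C) (hN₀ : 0 < N₀) :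
    ∃ c : ℝ, 0 < c ∧
      ∀ Φ N N' : ℝ → ℝ,
        ContinuousOn Φ (Ici 0) →
        (∀ t ∈ Ici (0 : ℝ), 0 ≤ Φ t) →
        (∀ t ∈ Ici (0 : ℝ), 0 < N t) →
        N 0 = N₀ →
        (∀ t ∈ Ici (0 : ℝ), HasDerivWithinAt N (N' t) (Ici 0) t) →
        (∀ t ∈ Ici (0 : ℝ), Real.exp (Real.exp t) < N t →
          N' t ≤ C * (Real.exp (Real.exp t) + Φ t) * (N t * Real.log (N t))) →
        ∀ t ∈ Ici (0 : ℝ),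
          N t ≤ Real.exp (Real.exp (c * (1 + ∫ s in (0 : ℝ)..t, (Real.exp (Real.exp s) + Φ s)))) := by
  refine ⟨C + 1 + N₀, by positivity, ?_⟩
  intro Φ N N' hΦ hΦ0 hN hN0 hd hineq T hT
  have hT' : (0 : ℝ) ≤ T := hT
  set c : ℝ := C + 1 + N₀ with hc
  set g : ℝ → ℝ := fun s => Real.exp (Real.exp s) + Φ (max s 0) with hg
  have hgc : Continuous g := by
    have h1 : Continuous fun s : ℝ => Φ (max s 0) :=
      hΦ.comp_continuous (by fun_prop) (fun s => le_max_right s 0)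
    have h2 : Continuous fun s : ℝ => Real.exp (Real.exp s) := by fun_prop
    exact h2.add h1
  have hg1 : ∀ s, 1 ≤ g s := by
    intro s
    have h1 : 0 ≤ Φ (max s 0) := hΦ0 _ (le_max_right s 0)
    have h2 : 1 ≤ Real.exp (Real.exp s) := Real.one_le_exp (Real.exp_pos s).le
    simp only [hg]; linarith
  set G : ℝ → ℝ := fun t => ∫ s in (0 : ℝ)..t, g s with hG
  have hGd : ∀ t, HasDerivAt G (g t) t := fun t =>
    (hgc.integral_hasStrictDerivAt 0 t).hasDerivAt
  have hGt : ∀ t, 0 ≤ t → t ≤ G t := by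
    intro t ht
    have := intervalIntegral.integral_mono_on (μ := MeasureTheory.volume) ht
      (continuous_const (y := (1 : ℝ)).intervalIntegrable 0 t) (hgc.intervalIntegrable 0 t)
      (fun x _ => hg1 x)
    simpa using this
  have hGeq : (∫ s in (0 : ℝ)..T, (Real.exp (Real.exp s) + Φ s)) = G T := by
    apply intervalIntegral.integral_congr
    intro s hs
    rw [uIcc_of_le hT'] at hs
    simp only [hg, max_eq_left hs.1]
  rw [hGeq]
  have hB : ∀ t, HasDerivAt (fun t => Real.exp (Real.exp (c * (1 + G t))))
      (Real.exp (Real.exp (c * (1 + G t))) * (Real.exp (c * (1 + G t)) * (c * g t))) t :=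
    fun t => ((((hGd t).const_add 1).const_mul c).exp).exp
  refine image_le_of_deriv_right_lt_deriv_boundary (f := N) (f' := N') (a := 0) (b := T)
    (B := fun t => Real.exp (Real.exp (c * (1 + G t)))) ?_ ?_ ?_ hB ?_ (right_mem_Icc.2 hT')
  · intro x hx
    exact ((hd x hx.1).continuousWithinAt).mono Icc_subset_Ici_self
  · intro x hx
    exact (hd x hx.1).mono (Ici_subset_Ici.2 hx.1)
  · have h0 : G 0 = 0 := by simp [hG]
    simp only [h0, hN0]
    have h1 := Real.add_one_le_exp (c * (1 + 0))
    have h2 := Real.add_one_le_exp (Real.exp (c * (1 + 0)))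
    linarith
  · intro x hx hNB
    have hx0 : 0 ≤ x := hx.1
    have hGx := hGt x hx0
    have hgx := hg1 x
    have hlt : x < c * (1 + G x) := by
      have : 1 * (1 + G x) ≤ c * (1 + G x) := by
        apply mul_le_mul_of_nonneg_right <;> linarith
      linarith
    have h := hineq x hx0 (by
      rw [hNB]
      exact Real.exp_lt_exp.2 (Real.exp_lt_exp.2 hlt))
    have hgx' : Real.exp (Real.exp x) + Φ x = g x := by simp only [hg, max_eq_left hx0]
    rw [hgx', hNB, Real.log_exp] at h
    refine lt_of_le_of_lt h ?_
    have hp : 0 < Real.exp (Real.exp (c * (1 + G x))) * Real.exp (c * (1 + G x)) * g x := by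
      have : 0 < g x := by linarith
      positivity
    have hCc : C < c := by linarith
    nlinarith [mul_lt_mul_of_pos_right hCc hp]

end
end
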